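/- Let H be a finite set with exactly 6 elements. Then any two distinct totals of H have exactly one syntheme in common, and every syntheme of H belongs to exactly two totals. -/

import Mathlib

/-!
Both `synthemes` and `totals` commute with injections (`synthemes_map`, `totals_map`), so the claim
only concerns the set `Fin 6`. There, the five duads through the point `0` lie in five different
synthemes of a total, and these five synthemes are pairwise disjoint as sets of duads. So a total has
the form `{P₁, …, P₅}`, where `Pₖ` is one of the three synthemes containing `{0, k}` and the `Pₖ` are
pairwise disjoint. Running through these few choices gives exactly six totals
(`totals_univ`), and the two assertions are read off from the list.
-/

/-- The synthemes of a finite set `H`: sets of three pairwise disjoint duads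
(two-element subsets of `H`) whose union is all of `H`, i.e. perfect matchings of `H`. -/
def synthemes {α : Type*} [DecidableEq α] (H : Finset α) :
    Finset (Finset (Finset α)) :=
  ((H.powersetCard 2).powersetCard 3).filter
    (fun P => (∀ D ∈ P, ∀ D' ∈ P, D ≠ D' → Disjoint D D') ∧ P.sup id = H)

/-- The totals of a finite set `H`: sets of five synthemes such that every duad of `H`
belongs to exactly one of them (one-factorizations of the complete graph on `H`). -/
def totals {α : Type*} [DecidableEq α] (H : Finset α) :
    Finset (Finset (Finset (Finset α))) :=
  ((synthemes H).powersetCard 5).filter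
    (fun F => ∀ D ∈ H.powersetCard 2, (F.filter (fun P => D ∈ P)).card = 1)

namespace SixPoints

open Finset

/-! ### Transport along injections -/

section Transport

variable {α β : Type*} [DecidableEq α] [DecidableEq β]

theorem synthemes_map (f : α ↪ β) (H : Finset α) :
    synthemes (H.map f) =
      (synthemes H).map (mapEmbedding (mapEmbedding f).toEmbedding).toEmbedding := by
  unfold synthemes
  rw [powersetCard_map, powersetCard_map, filter_map]
  congr 1
  apply filter_congr
  intro P _
  have hsup : (P.map (mapEmbedding f).toEmbedding).sup id = (P.sup id).map f := by
    ext x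
    simp only [mem_sup, mem_map]
    constructor
    · rintro ⟨_, ⟨D, hD, rfl⟩, hx⟩
      obtain ⟨y, hy, rfl⟩ := mem_map.1 hx
      exact ⟨y, ⟨D, hD, hy⟩, rfl⟩
    · rintro ⟨y, ⟨D, hD, hy⟩, rfl⟩
      exact ⟨_, ⟨D, hD, rfl⟩, mem_map_of_mem f hy⟩
  have hmap : mapEmbedding (mapEmbedding f).toEmbedding P =
      P.map (mapEmbedding f).toEmbedding := rfl
  simp only [Function.comp, RelEmbedding.coe_toEmbedding, hmap, hsup, forall_mem_map,
    mapEmbedding_apply, map_inj, disjoint_map, ne_eq]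

theorem totals_map (f : α ↪ β) (H : Finset α) :
    totals (H.map f) = (totals H).map
      (mapEmbedding (mapEmbedding (mapEmbedding f).toEmbedding).toEmbedding).toEmbedding := by
  unfold totals
  rw [synthemes_map, powersetCard_map, powersetCard_map, filter_map]
  congr 1
  apply filter_congr
  intro F _
  have hmap : mapEmbedding (mapEmbedding (mapEmbedding f).toEmbedding).toEmbedding F =
      F.map (mapEmbedding (mapEmbedding f).toEmbedding).toEmbedding := rfl
  have hmem (D : Finset α) (P : Finset (Finset α)) :
      (mapEmbedding f).toEmbedding D ∈
        (mapEmbedding (mapEmbedding f).toEmbedding).toEmbedding P ↔ D ∈ P :=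
    mem_map' (mapEmbedding f).toEmbedding
  simp only [Function.comp, forall_mem_map, RelEmbedding.coe_toEmbedding, hmap, filter_map,
    card_map]
  simp only [RelEmbedding.coe_toEmbedding] at hmem
  simp only [hmem]

end Transport

/-! ### Numbering the duads and synthemes of `Fin 6` -/

set_option maxRecDepth 100000 in
/-- The fifteen duads of `Fin 6`, in lexicographic order; the first five are the ones through `0`. -/
def duad : Fin 15 ↪ Finset (Fin 6) where
  toFun := ![{0, 1}, {0, 2}, {0, 3}, {0, 4}, {0, 5},
    {1, 2}, {1, 3}, {1, 4}, {1, 5}, {2, 3},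
    {2, 4}, {2, 5}, {3, 4}, {3, 5}, {4, 5}]
  inj' := by decide +kernel

set_option maxRecDepth 100000 in
/-- The fifteen synthemes of `Fin 6`, each given by the numbers of its three duads. The synthemes
containing `duad d`, for `d < 5`, are those with numbers `3 * d`, `3 * d + 1`, `3 * d + 2`. -/
def block : Fin 15 ↪ Finset (Fin 15) where
  toFun := ![{0, 9, 14}, {0, 10, 13}, {0, 11, 12}, {1, 6, 14}, {1, 7, 13},
    {1, 8, 12}, {2, 5, 14}, {2, 7, 11}, {2, 8, 10}, {3, 5, 13},
    {3, 6, 11}, {3, 8, 9}, {4, 5, 12}, {4, 6, 10}, {4, 7, 9}]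
  inj' := by decide +kernel

/-- The syntheme of `Fin 6` with a given number. -/
def synt : Fin 15 ↪ Finset (Finset (Fin 6)) :=
  block.trans (mapEmbedding duad).toEmbedding

set_option maxRecDepth 100000 in
/-- The six totals of `Fin 6`, each given by the numbers of its five synthemes. -/
def total : Fin 6 ↪ Finset (Fin 15) where
  toFun := ![{0, 4, 8, 10, 12}, {0, 5, 7, 9, 13}, {1, 3, 7, 11, 12},
    {1, 5, 6, 10, 14}, {2, 3, 8, 9, 14}, {2, 4, 6, 11, 13}]
  inj' := by decide +kernel

theorem duad_mem_synt (d s : Fin 15) : duad d ∈ synt s ↔ d ∈ block s :=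
  mem_map' duad

theorem duads_univ : (univ : Finset (Fin 6)).powersetCard 2 = univ.map duad := by
  symm
  apply eq_of_subset_of_card_le
  · intro D hD
    obtain ⟨d, -, rfl⟩ := mem_map.1 hD
    refine mem_powersetCard.2 ⟨subset_univ _, ?_⟩
    revert d
    decide +kernel
  · rw [card_powersetCard, card_map]
    decide

set_option maxRecDepth 100000 in
/-- Three pairwise disjoint duads form one of the listed synthemes. -/
theorem exists_block : ∀ a b, Disjoint (duad a) (duad b) →
    ∀ c, Disjoint (duad a) (duad c) → Disjoint (duad b) (duad c) →
    ∃ s, block s = {a, b, c} := by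
  decide +kernel

set_option maxRecDepth 100000 in
theorem block_matching : ∀ s, (∀ d ∈ block s, ∀ d' ∈ block s, d ≠ d' →
    Disjoint (duad d) (duad d')) ∧ (block s).sup duad = univ := by
  decide +kernel

set_option maxRecDepth 100000 in
theorem block_card : ∀ s, (block s).card = 3 := by
  decide +kernel

/-- The decidability instance is an implicit argument, so that it unifies with any instance for a
predicate on a concrete type. -/
theorem filter_map_eq {α β : Type*} {p : β → Prop} {_ : DecidablePred p} {f : α ↪ β}
    {s t : Finset α} (h : ∀ a, a ∈ s ∧ p (f a) ↔ a ∈ t) : (s.map f).filter p = t.map f := by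
  ext b
  simp only [mem_filter, mem_map]
  constructor
  · rintro ⟨⟨a, ha, rfl⟩, hp⟩
    exact ⟨a, (h a).1 ⟨ha, hp⟩, rfl⟩
  · rintro ⟨a, ha, rfl⟩
    exact ⟨⟨a, ((h a).2 ha).1, rfl⟩, ((h a).2 ha).2⟩

theorem synthemes_univ : synthemes (univ : Finset (Fin 6)) = univ.map synt := by
  unfold synthemes
  rw [duads_univ, powersetCard_map, synt, ← map_map]
  refine filter_map_eq fun B => ?_
  have hmap : mapEmbedding duad B = B.map duad := rfl
  simp only [RelEmbedding.coe_toEmbedding, hmap, forall_mem_map, sup_map, ne_eq,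
    EmbeddingLike.apply_eq_iff_eq, Function.id_comp]
  constructor
  · rintro ⟨hB, h, -⟩
    obtain ⟨a, b, c, hab, hac, hbc, rfl⟩ := card_eq_three.1 (mem_powersetCard.1 hB).2
    obtain ⟨s, hs⟩ := exists_block a b (h a (by simp) b (by simp) hab)
      c (h a (by simp) c (by simp) hac) (h b (by simp) c (by simp) hbc)
    exact mem_map.2 ⟨s, mem_univ s, hs⟩
  · intro hB
    obtain ⟨s, -, rfl⟩ := mem_map.1 hB
    exact ⟨mem_powersetCard.2 ⟨subset_univ _, block_card s⟩, block_matching s⟩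

/-! ### The totals of `Fin 6` -/

/-- `S` is the set of numbers of the synthemes of a total. -/
def IsTotal (S : Finset (Fin 15)) : Prop :=
  S.card = 5 ∧ ∀ d, (S.filter (fun s => d ∈ block s)).card = 1

set_option maxRecDepth 100000 in
/-- A syntheme contains at most one duad through `0`. -/
theorem unique_partner : ∀ s a b : Fin 15, a < 5 → b < 5 → a ∈ block s → b ∈ block s → a = b := by
  decide +kernel

set_option maxRecDepth 100000 in
set_option synthInstance.maxHeartbeats 400000 in
set_option synthInstance.maxSize 4096 in
/-- Five pairwise disjoint synthemes, one through each duad `{0, k}`, form one of the listed totals.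
Each disjointness condition is tested as soon as it is available, so that few of the 3⁵
combinations are visited. -/
theorem search :
    ∀ i, 0 ∈ block i → ∀ j, 1 ∈ block j → Disjoint (block i) (block j) →
    ∀ k, 2 ∈ block k → Disjoint (block i) (block k) → Disjoint (block j) (block k) →
    ∀ l, 3 ∈ block l → Disjoint (block i) (block l) → Disjoint (block j) (block l) →
      Disjoint (block k) (block l) →
    ∀ m, 4 ∈ block m → Disjoint (block i) (block m) → Disjoint (block j) (block m) →
      Disjoint (block k) (block m) → Disjoint (block l) (block m) →
    (∃ t, total t = {i, j, k, l, m}) ∧ ({i, j, k, l, m} : Finset (Fin 15)).card = 5 := by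
  decide +kernel

set_option maxRecDepth 100000 in
theorem total_spec : ∀ t, (total t).card = 5 ∧
    ∀ d, ((total t).filter (fun s => d ∈ block s)).card = 1 := by
  decide +kernel

theorem isTotal_iff (S : Finset (Fin 15)) : IsTotal S ↔ ∃ t, total t = S := by
  refine ⟨fun ⟨hcard, hS⟩ => ?_, fun ⟨t, ht⟩ => ht ▸ total_spec t⟩
  have ex (d : Fin 15) : ∃ s ∈ S, d ∈ block s := by
    obtain ⟨s, hs⟩ := card_pos.1 (hS d ▸ Nat.one_pos)
    exact ⟨s, mem_filter.1 hs⟩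
  have disj {a b s t : Fin 15} (hs : s ∈ S) (ht : t ∈ S) (has : a ∈ block s) (hbt : b ∈ block t)
      (ha : a < 5) (hb : b < 5) (hab : a ≠ b) : Disjoint (block s) (block t) := by
    refine disjoint_left.2 fun d hds hdt => hab ?_
    have hst := card_le_one.1 (hS d).le s (mem_filter.2 ⟨hs, hds⟩) t (mem_filter.2 ⟨ht, hdt⟩)
    exact unique_partner s a b ha hb has (hst ▸ hbt)
  obtain ⟨i, hi, mi⟩ := ex 0
  obtain ⟨j, hj, mj⟩ := ex 1
  obtain ⟨k, hk, mk⟩ := ex 2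
  obtain ⟨l, hl, ml⟩ := ex 3
  obtain ⟨m, hm, mm⟩ := ex 4
  obtain ⟨hmem, hcard'⟩ := search i mi
    j mj (disj hi hj mi mj (by decide) (by decide) (by decide))
    k mk (disj hi hk mi mk (by decide) (by decide) (by decide))
    (disj hj hk mj mk (by decide) (by decide) (by decide))
    l ml (disj hi hl mi ml (by decide) (by decide) (by decide))
    (disj hj hl mj ml (by decide) (by decide) (by decide))
    (disj hk hl mk ml (by decide) (by decide) (by decide))
    m mm (disj hi hm mi mm (by decide) (by decide) (by decide))
    (disj hj hm mj mm (by decide) (by decide) (by decide))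
    (disj hk hm mk mm (by decide) (by decide) (by decide))
    (disj hl hm ml mm (by decide) (by decide) (by decide))
  have hsub : {i, j, k, l, m} ⊆ S := by
    simp only [insert_subset_iff, singleton_subset_iff]
    exact ⟨hi, hj, hk, hl, hm⟩
  rwa [eq_of_subset_of_card_le hsub (by rw [hcard, hcard'])] at hmem

theorem totals_univ : totals (univ : Finset (Fin 6)) =
    (univ.map total).map (mapEmbedding synt).toEmbedding := by
  unfold totals
  rw [synthemes_univ, duads_univ, powersetCard_map]
  refine filter_map_eq fun S => ?_
  have hmap : mapEmbedding synt S = S.map synt := rfl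
  have hS : S ∈ univ.map total ↔ IsTotal S := by
    rw [isTotal_iff]
    simp only [mem_map, mem_univ, true_and]
  rw [hS, IsTotal]
  simp only [RelEmbedding.coe_toEmbedding, hmap, forall_mem_map, filter_map, card_map,
    Function.comp, duad_mem_synt, mem_powersetCard, subset_univ, mem_univ, true_and, forall_const]

set_option maxRecDepth 100000 in
theorem inter_card : ∀ t u, t ≠ u → (total t ∩ total u).card = 1 := by
  decide +kernel

set_option maxRecDepth 100000 in
theorem count : ∀ s, (univ.filter (fun t => s ∈ total t)).card = 2 := by
  decide +kernel

end SixPoints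

open Finset SixPoints in
/-- For a six-element set `H`, any two distinct totals have exactly one syntheme in
common, and every syntheme belongs to exactly two totals. -/
theorem totals_intersections {α : Type*} [DecidableEq α]
    (H : Finset α) (hH : H.card = 6) :
    (∀ F ∈ totals H, ∀ G ∈ totals H, F ≠ G → (F ∩ G).card = 1) ∧
    (∀ P ∈ synthemes H, ((totals H).filter (fun F => P ∈ F)).card = 2) := by
  obtain ⟨f, rfl⟩ : ∃ f : Fin 6 ↪ α, H = univ.map f := by
    refine ⟨(H.equivFinOfCardEq hH).symm.toEmbedding.trans (Function.Embedding.subtype _), ?_⟩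
    ext x
    simp only [mem_map, mem_univ, true_and]
    constructor
    · intro hx
      exact ⟨H.equivFinOfCardEq hH ⟨x, hx⟩, by simp⟩
    · rintro ⟨i, rfl⟩
      exact ((H.equivFinOfCardEq hH).symm i).2
  rw [totals_map, synthemes_map, totals_univ, synthemes_univ, map_map, map_map, map_map]
  constructor
  · intro F hF G hG hFG
    obtain ⟨t, -, rfl⟩ := mem_map.1 hF
    obtain ⟨u, -, rfl⟩ := mem_map.1 hG
    simp only [Function.Embedding.trans_apply, RelEmbedding.coe_toEmbedding,
      mapEmbedding_apply] at hFG ⊢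
    rw [← map_inter, ← map_inter, card_map, card_map]
    exact inter_card t u fun h => hFG (by rw [h])
  · intro P hP
    obtain ⟨s, -, rfl⟩ := mem_map.1 hP
    rw [filter_map, card_map, ← count s]
    congr 1
    apply filter_congr
    intro t _
    exact (mem_map' (mapEmbedding (mapEmbedding f).toEmbedding).toEmbedding).trans (mem_map' synt)
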